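/- Let (P_t)_{t≥0} be an increasing family of orthogonal projections on H and let f : [0,∞) → B(H) be adapted-commuting with respect to (P_t) and norm-continuous (continuous as a map into B(H) with the operator norm). Fix an interval [a,b] ⊆ [0,∞) and ξ ∈ H. Then there exists v ∈ H such that for every ε > 0 there is δ > 0 with ‖σ_θ ξ − v‖ < ε for every partition θ of [a,b] of mesh less than δ (i.e. σ_θ ξ converges as the mesh of θ tends to 0). -/

import Mathlib

/-- `sigmaSum f P θ` is the operator sum σ_θ = Σ_{k=1}^m f(t_{k−1})(P_{t_k} − P_{t_{k−1}})
where t₀ < t₁ < ⋯ < tₘ is the increasing enumeration of the finite set θ. -/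
noncomputable def sigmaSum {H : Type*} [NormedAddCommGroup H] [InnerProductSpace ℂ H]
    (f P : ℝ → H →L[ℂ] H) (θ : Finset ℝ) : H →L[ℂ] H :=
  (((θ.sort (· ≤ ·)).zip (θ.sort (· ≤ ·)).tail).map
    (fun p => f p.1 ∘L (P p.2 - P p.1))).sum

/-- `IsPartitionOf a b θ`: θ is a partition a = t₀ < t₁ < ⋯ < tₘ = b of [a,b]. -/
def IsPartitionOf (a b : ℝ) (θ : Finset ℝ) : Prop :=
  a ∈ θ ∧ b ∈ θ ∧ ∀ x ∈ θ, x ∈ Set.Icc a b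

/-- `meshOf θ` is the mesh max_{1≤k≤m}(t_k − t_{k−1}) of the partition θ. -/
noncomputable def meshOf (θ : Finset ℝ) : ℝ :=
  (((θ.sort (· ≤ ·)).zip (θ.sort (· ≤ ·)).tail).map (fun p => p.2 - p.1)).foldr max 0

/-!
A partition `θ` replaces `f` by the step function `x ↦ f (lastPointLE θ x)`, and the sum `σ_θ` is
unchanged when this step function is summed over any refinement of `θ`. Hence passing from `θ` to a
refinement changes the sum by `∑ h (sₖ₋₁) (P sₖ - P sₖ₋₁)`, where `h = f - f ∘ lastPointLE θ` is
uniformly small on `[a, b]` once the mesh is, by uniform continuity. Since `h s` commutes with the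
later projections, the terms of such a sum have pairwise orthogonal initial and final projections,
so its norm is at most `sup ‖h‖`, however fine the refinement. Comparing two partitions with their
union shows that the sums are Cauchy, even in operator norm and in any C⋆-algebra.
-/

open Filter Topology

section LeftSum

variable {ι R : Type*}

/-- The left-endpoint Riemann–Stieltjes sum `∑ g (tₖ₋₁) * (P tₖ - P tₖ₋₁)` over the consecutive
entries of a list. -/
def leftSum [NonUnitalNonAssocRing R] (g P : ι → R) (l : List ι) : R :=
  ((l.zip l.tail).map fun p => g p.1 * (P p.2 - P p.1)).sum

section NonUnitalNonAssocRing

variable [NonUnitalNonAssocRing R]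

theorem leftSum_nil (g P : ι → R) : leftSum g P [] = 0 := rfl

theorem leftSum_singleton (g P : ι → R) (s : ι) : leftSum g P [s] = 0 := rfl

theorem leftSum_cons_cons (g P : ι → R) (s t : ι) (l : List ι) :
    leftSum g P (s :: t :: l) = g s * (P t - P s) + leftSum g P (t :: l) := by
  simp only [leftSum, List.tail_cons, List.zip_cons_cons, List.map_cons, List.sum_cons]

theorem leftSum_congr {g h : ι → R} (P : ι → R) {l : List ι} (hgh : ∀ s ∈ l, g s = h s) :
    leftSum g P l = leftSum h P l := by
  refine congrArg List.sum (List.map_congr_left fun p hp => ?_)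
  rw [hgh p.1 (List.of_mem_zip hp).1]

theorem leftSum_sub (g h P : ι → R) (l : List ι) :
    leftSum (fun s => g s - h s) P l = leftSum g P l - leftSum h P l := by
  rw [eq_sub_iff_add_eq]
  simp only [leftSum, ← List.sum_map_add, sub_mul, sub_add_cancel]

theorem leftSum_append_cons (g P : ι → R) (s : ι) (l₁ l₂ : List ι) :
    leftSum g P (l₁ ++ s :: l₂) = leftSum g P (l₁ ++ [s]) + leftSum g P (s :: l₂) := by
  induction l₁ using List.twoStepInduction with
  | nil => simp [leftSum_singleton]
  | singleton r => simp [leftSum_cons_cons, leftSum_singleton]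
  | cons_cons r r' l₁ _ ih =>
    simp only [List.cons_append] at ih ⊢
    rw [leftSum_cons_cons, leftSum_cons_cons, ih, add_assoc]

theorem leftSum_append_cons_cons_cons {g : ι → R} (P : ι → R) {s x : ι} (hg : g x = g s) (t : ι)
    (l₁ l₂ : List ι) :
    leftSum g P (l₁ ++ s :: x :: t :: l₂) = leftSum g P (l₁ ++ s :: t :: l₂) := by
  rw [leftSum_append_cons, leftSum_append_cons g P s l₁ (t :: l₂)]
  simp only [leftSum_cons_cons, hg, mul_sub]
  abel

end NonUnitalNonAssocRing

section NonUnitalRing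

variable [NonUnitalRing R] {g P : ι → R} {l : List ι} {p : R}

theorem leftSum_mul_eq_zero (hp : ∀ s ∈ l, P s * p = p) : leftSum g P l * p = 0 := by
  induction l using List.twoStepInduction with
  | nil => exact zero_mul p
  | singleton s => exact zero_mul p
  | cons_cons s t l _ ih =>
    rw [List.forall_mem_cons] at hp
    rw [leftSum_cons_cons, add_mul, ih t hp.2, mul_assoc, sub_mul, hp.1, hp.2 t List.mem_cons_self,
      sub_self, mul_zero, add_zero]

theorem mul_leftSum_eq_zero (hp : ∀ s ∈ l, p * P s = p) (hdiag : ∀ s ∈ l, Commute (g s) (P s))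
    (hcomm : l.Pairwise fun s t => Commute (g s) (P t)) : p * leftSum g P l = 0 := by
  induction l using List.twoStepInduction with
  | nil => exact mul_zero p
  | singleton s => exact mul_zero p
  | cons_cons s t l _ ih =>
    rw [List.forall_mem_cons] at hp hdiag
    rw [List.pairwise_cons] at hcomm
    have hgs : Commute (g s) (P t - P s) := (hcomm.1 t List.mem_cons_self).sub_right hdiag.1
    rw [leftSum_cons_cons, mul_add, ih t hp.2 hdiag.2 hcomm.2, hgs.eq, ← mul_assoc, mul_sub, hp.1,
      hp.2 t List.mem_cons_self, sub_self, zero_mul, add_zero]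

end NonUnitalRing

end LeftSum

section CStarAlgebra

variable {A : Type*} [NonUnitalCStarAlgebra A]

theorem norm_add_eq_max_of_star_mul_eq_zero {u w : A} (hl : star u * w = 0)
    (hr : u * star w = 0) : ‖u + w‖ = max ‖u‖ ‖w‖ := by
  have hl' : star w * u = 0 := by simpa using congrArg star hl
  have hsq : star (u + w) * (u + w) = star u * u + star w * w := by
    simp only [star_add, add_mul, mul_add, hl, hl', add_zero, zero_add]
  have horth : star u * u * (star w * w) = 0 := by
    rw [mul_assoc, ← mul_assoc u, hr, zero_mul, mul_zero]
  refine (mul_self_inj (norm_nonneg _) (by positivity)).1 ?_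
  calc ‖u + w‖ * ‖u + w‖ = max (‖u‖ * ‖u‖) (‖w‖ * ‖w‖) := by
        simp only [← CStarRing.norm_star_mul_self, hsq,
          (IsSelfAdjoint.star_mul_self u).norm_add_eq_max (.star_mul_self w) horth]
    _ = max ‖u‖ ‖w‖ * max ‖u‖ ‖w‖ := by
        rcases le_total ‖u‖ ‖w‖ with h | h <;> simp [h, mul_self_le_mul_self (norm_nonneg _) h]

theorem norm_leftSum_le {ι : Type*} {g P : ι → A} {l : List ι} {C : ℝ} (hC : 0 ≤ C)
    (hP : ∀ s ∈ l, IsStarProjection (P s)) (hmono : l.Pairwise fun s t => P s * P t = P s)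
    (hdiag : ∀ s ∈ l, Commute (g s) (P s)) (hcomm : l.Pairwise fun s t => Commute (g s) (P t))
    (hg : ∀ s ∈ l, ‖g s‖ ≤ C) : ‖leftSum g P l‖ ≤ C := by
  induction l using List.twoStepInduction with
  | nil => simpa [leftSum_nil] using hC
  | singleton s => simpa [leftSum_singleton] using hC
  | cons_cons s t l _ ih =>
    rw [List.forall_mem_cons] at hP hdiag hg
    rw [List.pairwise_cons] at hmono hcomm
    have hPt : IsStarProjection (P t) := hP.2 t List.mem_cons_self
    have hΔ : IsStarProjection (P t - P s) :=
      hP.1.sub_of_mul_eq_left hPt (hmono.1 t List.mem_cons_self)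
    have hgΔ : Commute (g s) (P t - P s) := (hcomm.1 t List.mem_cons_self).sub_right hdiag.1
    have hPtP : ∀ r ∈ t :: l, P t * P r = P t :=
      List.forall_mem_cons.2 ⟨hPt.isIdempotentElem, (List.pairwise_cons.1 hmono.2).1⟩
    have hΔP : ∀ r ∈ t :: l, (P t - P s) * P r = P t - P s := fun r hr => by
      rw [sub_mul, hPtP r hr, hmono.1 r hr]
    have hPΔ : ∀ r ∈ t :: l, P r * (P t - P s) = P t - P s := fun r hr => by
      have hstar := congrArg star (hΔP r hr)
      rwa [star_mul, (hP.2 r hr).isSelfAdjoint.star_eq, hΔ.isSelfAdjoint.star_eq] at hstar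
    have hΔw : (P t - P s) * leftSum g P (t :: l) = 0 := mul_leftSum_eq_zero hΔP hdiag.2 hcomm.2
    have hwΔ : leftSum g P (t :: l) * (P t - P s) = 0 := leftSum_mul_eq_zero hPΔ
    have hhead : ‖g s * (P t - P s)‖ ≤ C :=
      calc ‖g s * (P t - P s)‖ ≤ ‖g s‖ * ‖P t - P s‖ := norm_mul_le _ _
        _ ≤ C * 1 := by gcongr; exacts [hg.1, hΔ.norm_le]
        _ = C := mul_one C
    rw [leftSum_cons_cons, norm_add_eq_max_of_star_mul_eq_zero]
    · exact max_le hhead (ih t hP.2 hmono.2 hdiag.2 hcomm.2 hg.2)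
    · rw [hgΔ.eq, star_mul, hΔ.isSelfAdjoint.star_eq, mul_assoc, hΔw, mul_zero]
    · have hΔw' : (P t - P s) * star (leftSum g P (t :: l)) = 0 := by
        simpa only [star_mul, hΔ.isSelfAdjoint.star_eq, star_zero] using congrArg star hwΔ
      rw [mul_assoc, hΔw', mul_zero]

end CStarAlgebra

section SortedList

variable {α : Type*}

theorem mem_zip_tail_of_consecutive {s t : α} {l : List α} (hst : [s, t] <:+: l) :
    (s, t) ∈ l.zip l.tail := by
  obtain ⟨l₁, l₂, rfl⟩ := hst
  induction l₁ using List.twoStepInduction with simp_all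

variable [LinearOrder α] {s t x : α} {θ : Finset α}

theorem left_mem_of_infix_sort (hst : [s, t] <:+: θ.sort (· ≤ ·)) : s ∈ θ :=
  (Finset.mem_sort (· ≤ ·)).1 (hst.subset List.mem_cons_self)

theorem le_or_ge_of_infix_sort (hst : [s, t] <:+: θ.sort (· ≤ ·)) (hx : x ∈ θ) :
    x ≤ s ∨ t ≤ x := by
  obtain ⟨l₁, l₂, h⟩ := hst
  have hsorted := θ.pairwise_sort (· ≤ ·)
  have hmem := (Finset.mem_sort (· ≤ ·)).2 hx
  grind

theorem sort_insert_of_sort_eq {l₁ l₂ : List α} (h : θ.sort (· ≤ ·) = l₁ ++ s :: t :: l₂)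
    (hsx : s < x) (hxt : x < t) :
    (insert x θ).sort (· ≤ ·) = l₁ ++ s :: x :: t :: l₂ := by
  have hθ := θ.sortedLT_sort.isChain
  rw [h, List.isChain_append_cons_cons] at hθ
  refine (insert x θ).sortedLT_sort.eq_of_mem_iff (List.IsChain.sortedLT ?_) fun y => ?_
  · exact List.isChain_append_cons_cons.2 ⟨hθ.1, hsx, hθ.2.2.cons_cons hxt⟩
  · rw [Finset.mem_sort, Finset.mem_insert, ← Finset.mem_sort (· ≤ ·), h]
    simp only [List.mem_append, List.mem_cons]
    tauto

end SortedList

section LastPoint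

variable {α : Type*} [ConditionallyCompleteLinearOrder α] {θ η : Finset α} {s t x : α}

/-- The largest point of `θ` that is at most `x`, i.e. the left endpoint of the interval of the
partition `θ` containing `x`. It has the junk value `sSup ∅` if there is no such point. -/
noncomputable def lastPointLE (θ : Finset α) (x : α) : α :=
  sSup ((θ : Set α) ∩ Set.Iic x)

theorem lastPointLE_of_mem (hx : x ∈ θ) : lastPointLE θ x = x :=
  IsGreatest.csSup_eq ⟨⟨hx, Set.self_mem_Iic⟩, fun _ hy => hy.2⟩

theorem lastPointLE_mem (hs : s ∈ θ) (hsx : s ≤ x) :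
    lastPointLE θ x ∈ (θ : Set α) ∩ Set.Iic x :=
  Set.Nonempty.csSup_mem ⟨s, hs, hsx⟩ (θ.finite_toSet.inter_of_left _)

theorem lastPointLE_eq_of_infix_sort (hη : η ⊆ θ) (hst : [s, t] <:+: θ.sort (· ≤ ·)) (hsx : s ≤ x)
    (hxt : x < t) : lastPointLE η x = lastPointLE η s := by
  suffices (η : Set α) ∩ Set.Iic x = (η : Set α) ∩ Set.Iic s from congrArg sSup this
  ext y
  refine and_congr_right fun hy => ⟨fun hyx => ?_, fun hys => le_trans hys hsx⟩
  exact (le_or_ge_of_infix_sort hst (hη hy)).resolve_right (lt_of_le_of_lt hyx hxt).not_ge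

end LastPoint

section Partition

variable {a b x s t : ℝ} {θ η : Finset ℝ}

theorem sub_le_meshOf (hst : [s, t] <:+: θ.sort (· ≤ ·)) : t - s ≤ meshOf θ :=
  List.le_max_of_le' 0 (List.mem_map_of_mem (mem_zip_tail_of_consecutive hst)) le_rfl

theorem meshOf_nonneg (θ : Finset ℝ) : 0 ≤ meshOf θ :=
  List.foldrRecOn _ max le_rfl fun _ h _ _ => le_max_of_le_right h

namespace IsPartitionOf

theorem exists_infix_sort (hθ : IsPartitionOf a b θ) (hax : a ≤ x) (hxb : x < b) :
    ∃ s t, [s, t] <:+: θ.sort (· ≤ ·) ∧ s ≤ x ∧ x < t := by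
  by_contra! h
  have hchain : (θ.sort (· ≤ ·)).IsChain fun s t => s ≤ x → t ≤ x :=
    (List.isChain_isInfix _).imp h
  have hle : ∀ s ∈ θ.sort (· ≤ ·), s ≤ x :=
    hchain.induction (· ≤ x) _ (fun _ _ => id) fun _ =>
      ((θ.pairwise_sort (· ≤ ·)).rel_head ((Finset.mem_sort _).2 hθ.1)).trans hax
  exact hxb.not_ge (hle b ((Finset.mem_sort _).2 hθ.2.1))

theorem sub_lastPointLE_le_meshOf (hθ : IsPartitionOf a b θ) (hx : x ∈ Set.Icc a b) :
    x - lastPointLE θ x ≤ meshOf θ := by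
  rcases hx.2.eq_or_lt with rfl | hxb
  · rw [lastPointLE_of_mem hθ.2.1, sub_self]
    exact meshOf_nonneg θ
  obtain ⟨s, t, hst, hsx, hxt⟩ := hθ.exists_infix_sort hx.1 hxb
  rw [lastPointLE_eq_of_infix_sort subset_rfl hst hsx hxt,
    lastPointLE_of_mem (left_mem_of_infix_sort hst)]
  linarith [sub_le_meshOf hst]

theorem union (hθ : IsPartitionOf a b θ) (hη : ↑η ⊆ Set.Icc a b) : IsPartitionOf a b (θ ∪ η) :=
  ⟨Finset.mem_union_left η hθ.1, Finset.mem_union_left η hθ.2.1, fun x hx =>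
    (Finset.mem_union.1 hx).elim (hθ.2.2 x) (@hη x)⟩

end IsPartitionOf

theorem leftSum_lastPointLE_sort_union {R : Type*} [NonUnitalNonAssocRing R] (f P : ℝ → R)
    (hθ : IsPartitionOf a b θ) (hη : ↑η ⊆ Set.Icc a b) :
    leftSum (fun x => f (lastPointLE θ x)) P ((θ ∪ η).sort (· ≤ ·)) =
      leftSum f P (θ.sort (· ≤ ·)) := by
  induction η using Finset.induction_on with
  | empty =>
    rw [Finset.union_empty]
    refine leftSum_congr P fun x hx => ?_
    rw [lastPointLE_of_mem ((Finset.mem_sort _).1 hx)]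
  | insert x η _ ih =>
    rw [Finset.coe_insert, Set.insert_subset_iff] at hη
    obtain ⟨⟨hax, hxb⟩, hη⟩ := hη
    rw [Finset.union_insert, ← ih hη]
    by_cases hx : x ∈ θ ∪ η
    · rw [Finset.insert_eq_of_mem hx]
    have hκ : IsPartitionOf a b (θ ∪ η) := hθ.union hη
    obtain ⟨s, t, hst, hsx, hxt⟩ :=
      hκ.exists_infix_sort hax (hxb.lt_of_ne fun h => hx (h ▸ hκ.2.1))
    have hsx' : s < x := hsx.lt_of_ne fun h => hx (h ▸ left_mem_of_infix_sort hst)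
    have hlast : lastPointLE θ x = lastPointLE θ s :=
      lastPointLE_eq_of_infix_sort Finset.subset_union_left hst hsx hxt
    obtain ⟨l₁, l₂, h⟩ := hst
    rw [List.append_assoc, List.cons_append, List.cons_append, List.nil_append] at h
    rw [sort_insert_of_sort_eq h.symm hsx' hxt, ← h]
    exact leftSum_append_cons_cons_cons (g := fun x => f (lastPointLE θ x)) P (congrArg f hlast) t
      l₁ l₂

/-- The filter of partitions of `[a, b]` whose mesh tends to `0`. -/
def meshFilter (a b : ℝ) : Filter (Finset ℝ) :=
  ⨅ δ > 0, 𝓟 {θ | IsPartitionOf a b θ ∧ meshOf θ < δ}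

theorem hasBasis_meshFilter (a b : ℝ) :
    (meshFilter a b).HasBasis (0 < ·) fun δ => {θ | IsPartitionOf a b θ ∧ meshOf θ < δ} :=
  hasBasis_biInf_principal'
    (fun δ hδ δ' hδ' => ⟨min δ δ', lt_min hδ hδ', fun _ h => ⟨h.1, h.2.trans_le (min_le_left _ _)⟩,
      fun _ h => ⟨h.1, h.2.trans_le (min_le_right _ _)⟩⟩) ⟨1, one_pos⟩

end Partition

section Convergence

variable {A : Type*} [NonUnitalCStarAlgebra A] {a b : ℝ} {P f : ℝ → A}

theorem dist_leftSum_sort_union_le (hP : ∀ s ∈ Set.Icc a b, IsStarProjection (P s))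
    (hP_mono : ∀ s ∈ Set.Icc a b, ∀ t ∈ Set.Icc a b, s ≤ t → P s * P t = P s)
    (hf_adapted : ∀ s ∈ Set.Icc a b, ∀ t ∈ Set.Icc a b, s ≤ t → Commute (f s) (P t))
    {δ ε : ℝ} (hε : 0 ≤ ε)
    (hδ : ∀ s ∈ Set.Icc a b, ∀ t ∈ Set.Icc a b, dist s t < δ → dist (f s) (f t) < ε)
    {θ η : Finset ℝ} (hθ : IsPartitionOf a b θ) (hmesh : meshOf θ < δ) (hη : ↑η ⊆ Set.Icc a b) :
    dist (leftSum f P ((θ ∪ η).sort (· ≤ ·))) (leftSum f P (θ.sort (· ≤ ·))) ≤ ε := by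
  set l := (θ ∪ η).sort (· ≤ ·)
  have hl : ∀ x ∈ l, x ∈ Set.Icc a b := fun x hx => (hθ.union hη).2.2 x ((Finset.mem_sort _).1 hx)
  have hsorted : l.Pairwise (· ≤ ·) := Finset.pairwise_sort _ _
  have hlast : ∀ x ∈ l, lastPointLE θ x ∈ Set.Icc a b ∧ lastPointLE θ x ≤ x := fun x hx =>
    have hmem := lastPointLE_mem hθ.1 (hl x hx).1
    ⟨hθ.2.2 _ hmem.1, hmem.2⟩
  have hcomm : ∀ s ∈ l, ∀ t ∈ l, s ≤ t → Commute (f s - f (lastPointLE θ s)) (P t) :=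
    fun s hs t ht hst => (hf_adapted s (hl s hs) t (hl t ht) hst).sub_left
      (hf_adapted _ (hlast s hs).1 t (hl t ht) ((hlast s hs).2.trans hst))
  have hsmall : ∀ s ∈ l, ‖f s - f (lastPointLE θ s)‖ ≤ ε := fun s hs => by
    have hdist : dist s (lastPointLE θ s) < δ := by
      rw [Real.dist_eq, abs_of_nonneg (sub_nonneg.2 (hlast s hs).2)]
      exact (hθ.sub_lastPointLE_le_meshOf (hl s hs)).trans_lt hmesh
    exact (dist_eq_norm (f s) _).symm.trans_le (hδ s (hl s hs) _ (hlast s hs).1 hdist).le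
  rw [dist_eq_norm, ← leftSum_lastPointLE_sort_union f P hθ hη, ← leftSum_sub]
  exact norm_leftSum_le hε (fun s hs => hP s (hl s hs))
    (hsorted.imp_of_mem fun {s t} hs ht => hP_mono s (hl s hs) t (hl t ht))
    (fun s hs => hcomm s hs s hs le_rfl)
    (hsorted.imp_of_mem fun {s t} hs ht => hcomm s hs t ht) hsmall

theorem sigma_mesh_converges_general (hP : ∀ s ∈ Set.Icc a b, IsStarProjection (P s))
    (hP_mono : ∀ s ∈ Set.Icc a b, ∀ t ∈ Set.Icc a b, s ≤ t → P s * P t = P s)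
    (hf_adapted : ∀ s ∈ Set.Icc a b, ∀ t ∈ Set.Icc a b, s ≤ t → Commute (f s) (P t))
    (hf_cont : ContinuousOn f (Set.Icc a b)) :
    ∃ T : A, Tendsto (fun θ => leftSum f P (θ.sort (· ≤ ·))) (meshFilter a b) (𝓝 T) := by
  rcases (meshFilter a b).eq_or_neBot with hbot | _
  · exact ⟨0, hbot ▸ tendsto_bot⟩
  refine cauchy_map_iff_exists_tendsto.1 (Metric.cauchy_iff.2 ⟨inferInstance, fun ε hε => ?_⟩)
  obtain ⟨δ, hδ, hfδ⟩ := Metric.uniformContinuousOn_iff.1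
    (isCompact_Icc.uniformContinuousOn_of_continuous hf_cont) (ε / 3) (by positivity)
  refine ⟨_, image_mem_map ((hasBasis_meshFilter a b).mem_of_mem hδ), ?_⟩
  rintro _ ⟨θ, ⟨hθ, hθδ⟩, rfl⟩ _ ⟨η, ⟨hη, hηδ⟩, rfl⟩
  have hunion {θ η : Finset ℝ} (hθ : IsPartitionOf a b θ) (hmesh : meshOf θ < δ)
      (hη : ↑η ⊆ Set.Icc a b) :
      dist (leftSum f P ((θ ∪ η).sort (· ≤ ·))) (leftSum f P (θ.sort (· ≤ ·))) ≤ ε / 3 :=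
    dist_leftSum_sort_union_le hP hP_mono hf_adapted (by positivity) hfδ hθ hmesh hη
  calc dist (leftSum f P (θ.sort (· ≤ ·))) (leftSum f P (η.sort (· ≤ ·)))
      ≤ dist (leftSum f P ((θ ∪ η).sort (· ≤ ·))) (leftSum f P (θ.sort (· ≤ ·))) +
          dist (leftSum f P ((θ ∪ η).sort (· ≤ ·))) (leftSum f P (η.sort (· ≤ ·))) :=
        dist_triangle_left _ _ _
    _ ≤ ε / 3 + ε / 3 :=
        add_le_add (hunion hθ hθδ hη.2.2) (Finset.union_comm η θ ▸ hunion hη hηδ hθ.2.2)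
    _ < ε := by linarith

end Convergence

/-- For increasing projections (P_t) and adapted-commuting, norm-continuous
f, for every ξ ∈ H the vectors σ_θ ξ converge in norm as the mesh of the partition θ of
[a,b] tends to 0. -/
theorem sigma_mesh_converges
    {H : Type*} [NormedAddCommGroup H] [InnerProductSpace ℂ H] [CompleteSpace H]
    (a b : ℝ) (ha : 0 ≤ a) (hab : a < b)
    (P : ℝ → H →L[ℂ] H)
    (hP_proj : ∀ s, 0 ≤ s → IsSelfAdjoint (P s) ∧ P s ∘L P s = P s)
    (hP_mono : ∀ s u, 0 ≤ s → s ≤ u → P s ∘L P u = P s ∧ P u ∘L P s = P s)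
    (f : ℝ → H →L[ℂ] H)
    (hf_adapted : ∀ s u, 0 ≤ s → s ≤ u → f s ∘L P u = P u ∘L f s)
    (hf_cont : ContinuousOn f (Set.Ici (0 : ℝ)))
    (ξ : H) :
    ∃ v : H, ∀ ε > (0 : ℝ), ∃ δ > (0 : ℝ), ∀ θ : Finset ℝ,
      IsPartitionOf a b θ → meshOf θ < δ → ‖sigmaSum f P θ ξ - v‖ < ε := by
  obtain ⟨T, hT⟩ := sigma_mesh_converges_general (a := a) (b := b) (P := P) (f := f)
    (fun s hs => ⟨(hP_proj s (ha.trans hs.1)).2, (hP_proj s (ha.trans hs.1)).1⟩)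
    (fun s hs u _ hsu => (hP_mono s u (ha.trans hs.1) hsu).1)
    (fun s hs u _ hsu => hf_adapted s u (ha.trans hs.1) hsu)
    (hf_cont.mono fun s hs => ha.trans hs.1)
  have hTξ : Tendsto (fun θ => sigmaSum f P θ ξ) (meshFilter a b) (𝓝 (T ξ)) :=
    ((ContinuousLinearMap.apply ℂ H ξ).continuous.tendsto T).comp hT
  refine ⟨T ξ, fun ε hε => ?_⟩
  simpa [dist_eq_norm] using
    ((hasBasis_meshFilter a b).tendsto_iff Metric.nhds_basis_ball).1 hTξ ε hε
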